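/- Let n ≥ 5 be an odd integer. Then there exists τ₀ ≥ 1 such that for all t ≥ τ₀ and all x ∈ ℝ, the potential V̂(x,t) = 2n (2 ū(x,t) φ(x,t) + φ(x,t)²)^{n−1} (ū(x,t) + φ(x,t)) is nonnegative. -/

import Mathlib

noncomputable def kap : ℝ := 1 / Real.sqrt Real.pi

noncomputable def kap3 : ℝ := -kap / 12

noncomputable def gam (n : ℕ) : ℝ := 1 / (2 * (n : ℝ) + 1)

noncomputable def eps (n : ℕ) : ℝ := 1 / ((n : ℝ) - 1)

noncomputable def alph (n : ℕ) : ℝ := 1 / 2 - gam n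

noncomputable def del (n : ℕ) : ℝ := ((n : ℝ) + 2) / ((n : ℝ) - 1)

noncomputable def lam (n : ℕ) : ℝ :=
  (del n * (del n + 1) / (2 * kap) ^ n) ^ (1 / ((n : ℝ) - 1))

noncomputable def lam0 (n : ℕ) : ℝ :=
  (lam n / (2 * kap)) *
    (-2 * (n : ℝ) * kap3 * del n * (del n + 1) - kap * (del n - 2 * eps n)) /
    (((n : ℝ) - 1) * del n * (del n + 1) + 2 * (2 * del n - 1))

def IsReactiveProfile (n : ℕ) (η : ℝ → ℝ) : Prop :=
  ContDiffOn ℝ 2 η (Set.Ici 0) ∧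
  (∀ z ∈ Set.Ici (0:ℝ), 0 < η z) ∧
  (∀ z ∈ Set.Ici (0:ℝ),
    derivWithin (derivWithin η (Set.Ici 0)) (Set.Ici 0) z
      = (2 * kap * z * η z + (η z) ^ 2) ^ n) ∧
  derivWithin η (Set.Ici 0) 0 = -kap ∧
  Filter.Tendsto η Filter.atTop (nhds 0)

/-- The corrector h: C² on [0,∞), satisfies
h'' + γη + αzη' = n(2κzη+η²)^{n−1}((2κz+2η)h + 2κ₃z³η), h'(0) = 0,
h(z) − λ₀ z^{2−δ} → 0 as z → ∞. -/
def IsCorrector (n : ℕ) (η h : ℝ → ℝ) : Prop :=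
  ContDiffOn ℝ 2 h (Set.Ici 0) ∧
  (∀ z ∈ Set.Ici (0:ℝ),
    derivWithin (derivWithin h (Set.Ici 0)) (Set.Ici 0) z + gam n * η z
        + alph n * z * derivWithin η (Set.Ici 0) z
      = (n : ℝ) * (2 * kap * z * η z + (η z) ^ 2) ^ (n - 1)
          * ((2 * kap * z + 2 * η z) * h z + 2 * kap3 * z ^ 3 * η z)) ∧
  derivWithin h (Set.Ici 0) 0 = 0 ∧
  Filter.Tendsto (fun z : ℝ => h z - lam0 n * z ^ (2 - del n)) Filter.atTop (nhds 0)

noncomputable def mu1 (y : ℝ) : ℝ :=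
  (2 / Real.sqrt Real.pi) * ∫ σ in (0:ℝ)..(y / 2), Real.exp (-σ ^ 2)

def IsDiffusiveProfile (n : ℕ) (μ : ℝ → ℝ) : Prop :=
  ContDiffOn ℝ 2 μ (Set.Ioi 0) ∧
  (∀ y ∈ Set.Ioi (0:ℝ), 0 < μ y) ∧
  (∀ y ∈ Set.Ioi (0:ℝ),
    deriv (deriv μ) y + y / 2 * deriv μ y + eps n * μ y = (2 * mu1 y * μ y) ^ n) ∧
  Filter.Tendsto (fun y : ℝ => y ^ del n * μ y) (nhdsWithin 0 (Set.Ioi 0)) (nhds (lam n)) ∧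
  Filter.Tendsto (fun y : ℝ => y ^ (2 * eps n) * μ y) Filter.atTop (nhds 0)

/-- u(x,t) = −erf(x/(2√t)). -/
noncomputable def uu (x t : ℝ) : ℝ := -mu1 (x / Real.sqrt t)

/-- ū(x,t) = μ₁(|x|/√t). -/
noncomputable def ubar (x t : ℝ) : ℝ := mu1 (|x| / Real.sqrt t)

/-- φ₁(z) = η(z) − λ z^{−δ}. -/
noncomputable def phi1 (n : ℕ) (η : ℝ → ℝ) (z : ℝ) : ℝ := η z - lam n * z ^ (-(del n))

/-- φ₂(z) = −λ₀ z^{2−δ} + h(z). -/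
noncomputable def phi2 (n : ℕ) (h : ℝ → ℝ) (z : ℝ) : ℝ := -lam0 n * z ^ (2 - del n) + h z

/-- μ₃(y) = μ₂(y) − λ y^{−δ}. -/
noncomputable def mu3 (n : ℕ) (μ : ℝ → ℝ) (y : ℝ) : ℝ := μ y - lam n * y ^ (-(del n))

/-- The asymptotic profile v_∞. -/
noncomputable def vInf (n : ℕ) (η μ h : ℝ → ℝ) (x t : ℝ) : ℝ :=
  mu1 (|x| / Real.sqrt t) + t ^ (-(eps n)) * μ (|x| / Real.sqrt t)
    + t ^ (-(gam n)) * phi1 n η (|x| / t ^ alph n)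
    + t ^ (-(3 * gam n)) * phi2 n h (|x| / t ^ alph n)

/-- φ(x,t) = t^{−γ} η(|z|) + t^{−ε} μ₃(|y|) + t^{−3γ} φ₂(|z|). -/
noncomputable def phiFun (n : ℕ) (η μ h : ℝ → ℝ) (x t : ℝ) : ℝ :=
  t ^ (-(gam n)) * η (|x| / t ^ alph n) + t ^ (-(eps n)) * mu3 n μ (|x| / Real.sqrt t)
    + t ^ (-(3 * gam n)) * phi2 n h (|x| / t ^ alph n)

/-- The potential V̂(x,t) = 2n (2ūφ + φ²)^{n−1} (ū + φ). -/
noncomputable def Vhat (n : ℕ) (η μ h : ℝ → ℝ) (x t : ℝ) : ℝ :=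
  2 * (n : ℝ) * (2 * ubar x t * phiFun n η μ h x t + phiFun n η μ h x t ^ 2) ^ (n - 1)
    * (ubar x t + phiFun n η μ h x t)

/-!
Since `n - 1` is even, it suffices that `ū + φ > 0` for large `t`. With `z = |x| / t^α` and
`r = t^{-γ}`, the exponents are arranged so that `|x| / √t = z r` and
`φ = r (η(z) + t^{-(ε-γ)} μ₃(z r) + t^{-2γ} φ₂(z))`, where `γ < ε`. The leading part
`μ₁(z r) + r η(z)` is at least `c r` for some `c > 0`: for `z ≤ 1` because `η` is positive, for
`z ≥ 1` because `μ₁(r)` is comparable to `r`. So boundedness of `μ₃` and `φ₂` from below is enough.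
For `φ₂` this is continuity on `[0, ∞)`, as `δ ≤ 2`, together with its behaviour at infinity.
For `μ₃ = μ₂ - λ y^{-δ}` it is a maximum-principle argument on `(0, 1]`. Below the singular solution
`λ y^{-δ}` of `v'' = (2κ y v)^n`, the nonlinearity at `v` is at most `δ(δ+1) y^{-2} v`. For `b < λ`,
the function `b y^{-δ} - λ` is a strict subsolution of the linear equation with this right-hand
side, so `μ₂` cannot cross it.
-/

open Set Filter Topology

/-! ### Comparison on an interval -/

theorem deriv_deriv_nonneg_of_isLocalMin {f : ℝ → ℝ} {x : ℝ} (hf : IsLocalMin f x)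
    (hc : ContinuousAt f x) : 0 ≤ deriv (deriv f) x := by
  by_contra! hneg
  have hmax : IsLocalMax f x := isLocalMax_of_deriv_deriv_neg hneg hf.deriv_eq_zero hc
  have hconst : f =ᶠ[𝓝 x] fun _ => f x := by
    filter_upwards [hf, hmax] with u hmin hmax using le_antisymm hmax hmin
  simp [hconst.deriv.deriv_eq] at hneg

theorem exists_isLocalMin_neg {f : ℝ → ℝ} {a b y : ℝ} (hf : ContinuousOn f (Ioc a b))
    (ha : ∀ᶠ x in 𝓝[>] a, 0 ≤ f x) (hb : 0 ≤ f b) (hy : y ∈ Ioc a b) (hfy : f y < 0) :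
    ∃ x ∈ Ioo a b, f x < 0 ∧ IsLocalMin f x := by
  obtain ⟨a', hfa', haa', ha'y⟩ : ∃ a', 0 ≤ f a' ∧ a' ∈ Ioo a y :=
    (ha.and (Ioo_mem_nhdsGT hy.1)).exists
  have hyI : y ∈ Icc a' b := ⟨ha'y.le, hy.2⟩
  obtain ⟨x, hx, hmin⟩ := isCompact_Icc.exists_isMinOn ⟨y, hyI⟩
    (hf.mono fun u hu => ⟨haa'.trans_le hu.1, hu.2⟩)
  have hfx : f x < 0 := (hmin hyI).trans_lt hfy
  have hxa' : a' < x := hx.1.lt_of_ne fun h => (h ▸ hfa').not_gt hfx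
  have hxb : x < b := hx.2.lt_of_ne fun h => (h ▸ hb).not_gt hfx
  exact ⟨x, ⟨haa'.trans hxa', hxb⟩, hfx, hmin.isLocalMin (Icc_mem_nhds hxa' hxb)⟩

theorem le_of_deriv_deriv_lt_of_deriv_eq {v w : ℝ → ℝ} {a b : ℝ}
    (hv : ∀ x ∈ Ioc a b, ContDiffAt ℝ 2 v x) (hw : ∀ x ∈ Ioc a b, ContDiffAt ℝ 2 w x)
    (ha : ∀ᶠ x in 𝓝[>] a, w x ≤ v x) (hb : w b ≤ v b)
    (h : ∀ x ∈ Ioo a b, v x < w x → deriv v x = deriv w x →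
      deriv (deriv v) x < deriv (deriv w) x) :
    ∀ x ∈ Ioc a b, w x ≤ v x := by
  intro y hy
  by_contra! hlt
  obtain ⟨x, hx, hneg, hmin⟩ := exists_isLocalMin_neg (f := v - w)
    (fun u hu => ((hv u hu).sub (hw u hu)).continuousAt.continuousWithinAt)
    (by simpa using ha) (by simpa using hb) hy (by simpa using hlt)
  have hvx := hv x ⟨hx.1, hx.2.le⟩
  have hwx := hw x ⟨hx.1, hx.2.le⟩
  have hderiv : deriv v x = deriv w x := by
    have hzero := hmin.deriv_eq_zero
    rwa [deriv_sub (hvx.differentiableAt two_ne_zero) (hwx.differentiableAt two_ne_zero),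
      sub_eq_zero] at hzero
  have hderiv2 : deriv (deriv (v - w)) x = deriv (deriv v) x - deriv (deriv w) x := by
    simpa only [iteratedDeriv_succ, iteratedDeriv_zero] using iteratedDeriv_sub (n := 2) hvx hwx
  have hnonneg := deriv_deriv_nonneg_of_isLocalMin hmin (hvx.sub hwx).continuousAt
  have hlt := h x hx (by simpa using hneg) hderiv
  linarith

theorem bddBelow_image_Ici_of_isBoundedUnder {f : ℝ → ℝ} {a : ℝ} (hf : ContinuousOn f (Ici a))
    (hbdd : IsBoundedUnder (· ≥ ·) atTop f) : BddBelow (f '' Ici a) := by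
  obtain ⟨B, hB⟩ := hbdd.eventually_ge
  obtain ⟨Z, hZ⟩ := eventually_atTop.1 hB
  have hcompact : BddBelow (f '' Icc a Z) :=
    isCompact_Icc.bddBelow_image (hf.mono Icc_subset_Ici_self)
  have htail : BddBelow (f '' Ici Z) := ⟨B, forall_mem_image.2 hZ⟩
  refine (hcompact.union htail).mono ?_
  rw [← image_union]
  exact image_mono Ici_subset_Icc_union_Ici

/-! ### The constants -/

section Constants

variable {n : ℕ}

theorem kap_pos : 0 < kap := by
  unfold kap
  positivity

theorem gam_pos (n : ℕ) : 0 < gam n := by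
  unfold gam
  positivity

theorem gam_lt_eps (hn : 1 < n) : gam n < eps n := by
  have hn' : (1 : ℝ) < n := mod_cast hn
  unfold gam eps
  apply one_div_lt_one_div_of_lt <;> linarith

theorem eps_pos (hn : 1 < n) : 0 < eps n :=
  (gam_pos n).trans (gam_lt_eps hn)

theorem two_mul_eps_le_del (hn : 1 < n) : 2 * eps n ≤ del n := by
  have hn' : (0 : ℝ) < n - 1 := sub_pos.2 (mod_cast hn)
  unfold eps del
  rw [mul_one_div]
  gcongr
  linarith

theorem del_pos (hn : 1 < n) : 0 < del n := by
  linarith [eps_pos hn, two_mul_eps_le_del hn]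

theorem del_le_two (hn : 4 ≤ n) : del n ≤ 2 := by
  have hn' : (4 : ℝ) ≤ n := mod_cast hn
  unfold del
  rw [div_le_iff₀] <;> linarith

theorem lam_pos (hn : 1 < n) : 0 < lam n := by
  have := del_pos hn
  have := kap_pos
  unfold lam
  positivity

theorem lam_pow (hn : 1 < n) : lam n ^ (n - 1) = del n * (del n + 1) / (2 * kap) ^ n := by
  have := del_pos hn
  have := kap_pos
  rw [lam, ← Nat.cast_pred (by omega), one_div]
  exact Real.rpow_inv_natCast_pow (by positivity) (by omega)

-- `λ y^{-δ}` solves `v'' = (2κ y v)^n`; this is that equation divided by `v`.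
theorem singular_potential_eq (hn : 1 < n) {y : ℝ} (hy : 0 < y) :
    (2 * kap * y) ^ n * (lam n * y ^ (-del n)) ^ (n - 1)
      = del n * (del n + 1) * y ^ (-2 : ℝ) := by
  have hn' : (n : ℝ) - 1 ≠ 0 := (sub_pos.2 (mod_cast hn)).ne'
  have hkap := kap_pos
  have hexp : y ^ n * (y ^ (-del n)) ^ (n - 1) = y ^ (-2 : ℝ) := by
    rw [← Real.rpow_natCast, ← Real.rpow_mul_natCast hy.le, ← Real.rpow_add hy,
      Nat.cast_pred (by omega), del]
    congr 1
    field_simp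
    ring
  rw [mul_pow _ y, mul_pow (lam n), lam_pow hn, ← hexp]
  field_simp

theorem div_sqrt_eq_div_rpow_alph_mul (n : ℕ) (a : ℝ) {t : ℝ} (ht : 0 < t) :
    a / √t = a / t ^ alph n * t ^ (-gam n) := by
  rw [div_mul_eq_mul_div, mul_div_assoc, ← Real.rpow_sub ht, Real.sqrt_eq_rpow, div_eq_mul_inv,
    ← Real.rpow_neg ht.le, alph]
  congr 2
  ring

end Constants

/-! ### The error function profile -/

theorem intervalIntegrable_exp_neg_sq (a b : ℝ) :
    IntervalIntegrable (fun σ : ℝ => Real.exp (-σ ^ 2)) MeasureTheory.volume a b :=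
  (by fun_prop : Continuous fun σ : ℝ => Real.exp (-σ ^ 2)).intervalIntegrable a b

theorem mu1_monotone : Monotone mu1 := by
  intro y₁ y₂ hy
  have hnonneg : 0 ≤ ∫ σ in (y₁ / 2)..(y₂ / 2), Real.exp (-σ ^ 2) :=
    intervalIntegral.integral_nonneg (by linarith) fun σ _ => (Real.exp_pos _).le
  rw [← intervalIntegral.integral_interval_sub_left (intervalIntegrable_exp_neg_sq 0 _)
    (intervalIntegrable_exp_neg_sq 0 _), sub_nonneg] at hnonneg
  exact mul_le_mul_of_nonneg_left hnonneg (by positivity)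

theorem mu1_le {y : ℝ} (hy : 0 ≤ y) : mu1 y ≤ kap * y := by
  have hint : ∫ σ in (0 : ℝ)..(y / 2), Real.exp (-σ ^ 2) ≤ ∫ _ in (0 : ℝ)..(y / 2), (1 : ℝ) :=
    intervalIntegral.integral_mono_on (by linarith) (intervalIntegrable_exp_neg_sq _ _) (by simp)
      fun σ _ => Real.exp_le_one_iff.2 (neg_nonpos.2 (sq_nonneg σ))
  calc mu1 y ≤ 2 / √Real.pi * ∫ _ in (0 : ℝ)..(y / 2), (1 : ℝ) :=
        mul_le_mul_of_nonneg_left hint (by positivity)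
    _ = kap * y := by
        simp only [intervalIntegral.integral_const, smul_eq_mul, kap]
        ring

theorem kap_mul_exp_mul_le_mu1 {y : ℝ} (hy : 0 ≤ y) :
    kap * Real.exp (-(y / 2) ^ 2) * y ≤ mu1 y := by
  have hint : ∫ _ in (0 : ℝ)..(y / 2), Real.exp (-(y / 2) ^ 2)
      ≤ ∫ σ in (0 : ℝ)..(y / 2), Real.exp (-σ ^ 2) := by
    refine intervalIntegral.integral_mono_on (by linarith) (by simp)
      (intervalIntegrable_exp_neg_sq _ _) fun σ hσ => ?_
    gcongr
    exacts [hσ.1, hσ.2]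
  calc kap * Real.exp (-(y / 2) ^ 2) * y
      = 2 / √Real.pi * ∫ _ in (0 : ℝ)..(y / 2), Real.exp (-(y / 2) ^ 2) := by
        simp only [intervalIntegral.integral_const, smul_eq_mul, kap]
        ring
    _ ≤ mu1 y := mul_le_mul_of_nonneg_left hint (by positivity)

theorem mu1_nonneg {y : ℝ} (hy : 0 ≤ y) : 0 ≤ mu1 y :=
  calc 0 = mu1 0 := by simp [mu1]
    _ ≤ mu1 y := mu1_monotone hy

theorem exists_pos_forall_mul_le_mu1_add {η : ℝ → ℝ} (hη : ContinuousOn η (Ici 0))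
    (hη_pos : ∀ z ∈ Ici (0 : ℝ), 0 < η z) :
    ∃ c > 0, ∀ r ∈ Icc (0 : ℝ) 1, ∀ z ≥ 0, c * r ≤ mu1 (z * r) + r * η z := by
  obtain ⟨m, hm, hmin⟩ := isCompact_Icc.exists_isMinOn (nonempty_Icc.2 (zero_le_one' ℝ))
    (hη.mono Icc_subset_Ici_self)
  have hkap := kap_pos
  refine ⟨min (η m) (kap * Real.exp (-(1 / 2) ^ 2)), lt_min (hη_pos m hm.1) (by positivity),
    fun r hr z hz => ?_⟩
  obtain ⟨hr0, hr1⟩ := hr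
  have hηz := hη_pos z hz
  rcases le_total z 1 with hz1 | hz1
  · calc min (η m) (kap * Real.exp (-(1 / 2) ^ 2)) * r
        ≤ η z * r := by
          gcongr
          exact (min_le_left _ _).trans (hmin ⟨hz, hz1⟩)
      _ ≤ mu1 (z * r) + r * η z := by linarith [mu1_nonneg (mul_nonneg hz hr0)]
  · calc min (η m) (kap * Real.exp (-(1 / 2) ^ 2)) * r
        ≤ kap * Real.exp (-(r / 2) ^ 2) * r := by
          gcongr
          exact (min_le_right _ _).trans (by gcongr)
      _ ≤ mu1 r := kap_mul_exp_mul_le_mu1 hr0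
      _ ≤ mu1 (z * r) := mu1_monotone (le_mul_of_one_le_left hr0 hz1)
      _ ≤ mu1 (z * r) + r * η z := le_add_of_nonneg_right (by positivity)

/-! ### Lower bound for the regular part of the diffusive profile -/

/-- Nonnegative supersolutions of the diffusive profile equation on `(0, ∞)` that are at least as
singular at the origin as `λ y^{-δ}`, the latter in the form `liminf y^δ μ(y) ≥ λ`. -/
structure IsDiffusiveSupersolution (n : ℕ) (μ : ℝ → ℝ) : Prop where
  contDiffOn : ContDiffOn ℝ 2 μ (Ioi 0)
  nonneg : ∀ y > 0, 0 ≤ μ y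
  le_reaction : ∀ y > 0,
    deriv (deriv μ) y + y / 2 * deriv μ y + eps n * μ y ≤ (2 * mu1 y * μ y) ^ n
  eventually_lt : ∀ b < lam n, ∀ᶠ y in 𝓝[>] 0, b < y ^ del n * μ y

theorem IsDiffusiveProfile.isDiffusiveSupersolution {n : ℕ} {μ : ℝ → ℝ}
    (hμ : IsDiffusiveProfile n μ) : IsDiffusiveSupersolution n μ where
  contDiffOn := hμ.1
  nonneg y hy := (hμ.2.1 y hy).le
  le_reaction y hy := (hμ.2.2.1 y hy).le
  eventually_lt _ hb := hμ.2.2.2.1.eventually_const_lt hb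

/-- The barrier `b y^{-δ} - λ`, compared from below with diffusive supersolutions on `(0, 1]`;
`b < λ` makes it less singular than they are, and the shift by `λ` makes it negative at `1`. -/
noncomputable def diffusiveBarrier (n : ℕ) (b y : ℝ) : ℝ := b * y ^ (-del n) - lam n

section Barrier

variable {n : ℕ} {b y : ℝ}

theorem contDiffAt_diffusiveBarrier (hy : y ≠ 0) : ContDiffAt ℝ 2 (diffusiveBarrier n b) y :=
  (contDiffAt_const.mul (Real.contDiffAt_rpow_const_of_ne hy)).sub contDiffAt_const

theorem deriv_diffusiveBarrier :
    deriv (diffusiveBarrier n b) = fun y => b * (-del n * y ^ (-del n - 1)) := by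
  ext y
  unfold diffusiveBarrier
  rw [deriv_sub_const, deriv_const_mul_field, Real.deriv_rpow_const]

theorem deriv_deriv_diffusiveBarrier :
    deriv (deriv (diffusiveBarrier n b)) y
      = b * (-del n * ((-del n - 1) * y ^ (-del n - 1 - 1))) := by
  rw [deriv_diffusiveBarrier, deriv_const_mul_field, deriv_const_mul_field, Real.deriv_rpow_const]

theorem diffusiveBarrier_strict_subsolution (hn : 4 ≤ n) (hb : b ≤ lam n) (hy : y ∈ Ioc 0 1) :
    del n * (del n + 1) * y ^ (-2 : ℝ) * diffusiveBarrier n b y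
      < deriv (deriv (diffusiveBarrier n b)) y + y / 2 * deriv (diffusiveBarrier n b) y
        + eps n * diffusiveBarrier n b y := by
  have hn1 : 1 < n := by omega
  have hδ := del_pos hn1
  have hε := eps_pos hn1
  have hδε := two_mul_eps_le_del hn1
  have hlam := lam_pos hn1
  have hmul : y * y ^ (-del n - 1) = y ^ (-del n) := by
    rw [Real.rpow_sub_one hy.1.ne', mul_div_cancel₀ _ hy.1.ne']
  have hadd : y ^ (-del n - 1 - 1) = y ^ (-2 : ℝ) * y ^ (-del n) := by
    rw [← Real.rpow_add hy.1]
    ring_nf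
  have hone : 1 ≤ y ^ (-2 : ℝ) := Real.one_le_rpow_of_pos_of_le_one_of_nonpos hy.1 hy.2 (by simp)
  have hbound : b * y ^ (-del n) ≤ lam n * y ^ (-2 : ℝ) := by
    have hpos : 0 < y ^ (-del n) := Real.rpow_pos_of_pos hy.1 _
    have hexp : y ^ (-del n) ≤ y ^ (-2 : ℝ) :=
      Real.rpow_le_rpow_of_exponent_ge hy.1 hy.2 (by linarith [del_le_two hn])
    gcongr
  have hdrift : (del n / 2 - eps n) * (b * y ^ (-del n)) + eps n * lam n
      < del n * (del n + 1) * y ^ (-2 : ℝ) * lam n :=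
    calc (del n / 2 - eps n) * (b * y ^ (-del n)) + eps n * lam n
        ≤ (del n / 2 - eps n) * (lam n * y ^ (-2 : ℝ)) + eps n * (lam n * y ^ (-2 : ℝ)) := by
          gcongr
          · linarith
          · exact le_mul_of_one_le_right hlam.le hone
      _ = del n / 2 * (y ^ (-2 : ℝ) * lam n) := by ring
      _ < del n * (del n + 1) * (y ^ (-2 : ℝ) * lam n) := by
          gcongr
          nlinarith
      _ = del n * (del n + 1) * y ^ (-2 : ℝ) * lam n := by ring
  rw [deriv_deriv_diffusiveBarrier, deriv_diffusiveBarrier, diffusiveBarrier, hadd]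
  linear_combination hdrift + del n / 2 * b * hmul

theorem reaction_le_of_le_singular (hn : 1 < n) {m : ℝ} (hy : 0 < y) (hm : 0 ≤ m)
    (hle : m ≤ lam n * y ^ (-del n)) :
    (2 * mu1 y * m) ^ n ≤ del n * (del n + 1) * y ^ (-2 : ℝ) * m := by
  have hkap := kap_pos
  have hmu1 := mu1_nonneg hy.le
  calc (2 * mu1 y * m) ^ n
      ≤ (2 * (kap * y) * m) ^ n := by gcongr; exact mu1_le hy.le
    _ = (2 * kap * y) ^ n * m ^ (n - 1) * m := by
        rw [mul_assoc _ (m ^ (n - 1)), pow_sub_one_mul (by omega)]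
        ring
    _ ≤ (2 * kap * y) ^ n * (lam n * y ^ (-del n)) ^ (n - 1) * m := by gcongr
    _ = del n * (del n + 1) * y ^ (-2 : ℝ) * m := by
        rw [singular_potential_eq hn hy]

namespace IsDiffusiveSupersolution

variable {μ : ℝ → ℝ}

theorem eventually_diffusiveBarrier_le (hn : 1 < n) (hμ : IsDiffusiveSupersolution n μ)
    (hb : b < lam n) : ∀ᶠ y in 𝓝[>] 0, diffusiveBarrier n b y ≤ μ y := by
  filter_upwards [hμ.eventually_lt b hb, self_mem_nhdsWithin] with y hlt (hy : 0 < y)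
  have hsing : b * y ^ (-del n) < μ y := by
    rwa [Real.rpow_neg hy.le, ← div_eq_mul_inv, div_lt_iff₀' (Real.rpow_pos_of_pos hy _)]
  exact (sub_le_self _ (lam_pos hn).le).trans hsing.le

theorem deriv_deriv_lt_of_lt_diffusiveBarrier (hn : 4 ≤ n) (hμ : IsDiffusiveSupersolution n μ)
    (hb : b ≤ lam n) (hy : y ∈ Ioc 0 1) (hlt : μ y < diffusiveBarrier n b y)
    (hderiv : deriv μ y = deriv (diffusiveBarrier n b) y) :
    deriv (deriv μ) y < deriv (deriv (diffusiveBarrier n b)) y := by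
  have hn1 : 1 < n := by omega
  have hδ := del_pos hn1
  have hone : 1 ≤ y ^ (-2 : ℝ) := Real.one_le_rpow_of_pos_of_le_one_of_nonpos hy.1 hy.2 (by simp)
  have hsing : diffusiveBarrier n b y ≤ lam n * y ^ (-del n) := by
    have hpos : 0 < y ^ (-del n) := Real.rpow_pos_of_pos hy.1 _
    exact (sub_le_self _ (lam_pos hn1).le).trans (by gcongr)
  have hcoef : 0 < del n * (del n + 1) * y ^ (-2 : ℝ) - eps n := by
    nlinarith [two_mul_eps_le_del hn1, mul_pos hδ hδ]
  have hsuper : deriv (deriv μ) y + y / 2 * deriv (diffusiveBarrier n b) y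
      ≤ (del n * (del n + 1) * y ^ (-2 : ℝ) - eps n) * μ y := by
    have hreact := reaction_le_of_le_singular hn1 hy.1 (hμ.nonneg y hy.1) (hlt.le.trans hsing)
    have hode := hμ.le_reaction y hy.1
    rw [hderiv] at hode
    linarith
  linarith [mul_lt_mul_of_pos_left hlt hcoef, diffusiveBarrier_strict_subsolution hn hb hy]

theorem diffusiveBarrier_le (hn : 4 ≤ n) (hμ : IsDiffusiveSupersolution n μ) (hb : b < lam n) :
    ∀ y ∈ Ioc 0 1, diffusiveBarrier n b y ≤ μ y := by
  have hle_one : diffusiveBarrier n b 1 ≤ μ 1 := by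
    have := hμ.nonneg 1 one_pos
    rw [diffusiveBarrier, Real.one_rpow]
    linarith
  exact le_of_deriv_deriv_lt_of_deriv_eq
    (fun y hy => hμ.contDiffOn.contDiffAt (Ioi_mem_nhds hy.1))
    (fun y hy => contDiffAt_diffusiveBarrier hy.1.ne')
    (hμ.eventually_diffusiveBarrier_le (by omega) hb) hle_one
    (fun y hy => hμ.deriv_deriv_lt_of_lt_diffusiveBarrier hn hb.le ⟨hy.1, hy.2.le⟩)

theorem neg_lam_le_mu3 (hn : 4 ≤ n) (hμ : IsDiffusiveSupersolution n μ) (hy : 0 < y) :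
    -lam n ≤ mu3 n μ y := by
  have hlam := lam_pos (show 1 < n by omega)
  have hpos : 0 < y ^ (-del n) := Real.rpow_pos_of_pos hy _
  rw [mu3, neg_le_sub_iff_le_add]
  rcases le_or_gt y 1 with hy1 | hy1
  · rw [← le_div_iff₀ hpos]
    refine le_of_forall_lt_imp_le_of_dense fun b hb => ?_
    rw [le_div_iff₀ hpos, ← sub_le_iff_le_add]
    exact hμ.diffusiveBarrier_le hn hb y ⟨hy, hy1⟩
  · have hδ := del_pos (show 1 < n by omega)
    have hle : y ^ (-del n) ≤ 1 := Real.rpow_le_one_of_one_le_of_nonpos hy1.le (by linarith)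
    exact (mul_le_of_le_one_right hlam.le hle).trans (le_add_of_nonneg_left (hμ.nonneg y hy))

theorem bddBelow_mu3 (hn : 4 ≤ n) (hμ : IsDiffusiveSupersolution n μ) :
    BddBelow (mu3 n μ '' Ici 0) := by
  -- `mu3 n μ 0` involves the junk value `0 ^ (-δ) = 0`, but one point does not affect boundedness.
  rw [← Ioi_insert, image_insert_eq, bddBelow_insert]
  exact ⟨-lam n, forall_mem_image.2 fun y hy => hμ.neg_lam_le_mu3 hn hy⟩

end IsDiffusiveSupersolution

end Barrier

theorem bddBelow_phi2 {n : ℕ} (hn : 4 ≤ n) {h : ℝ → ℝ} (hh : ContinuousOn h (Ici 0))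
    (hh_bdd : IsBoundedUnder (· ≥ ·) atTop fun z => h z - lam0 n * z ^ (2 - del n)) :
    BddBelow (phi2 n h '' Ici 0) := by
  refine bddBelow_image_Ici_of_isBoundedUnder ?_ (by convert hh_bdd using 2; rw [phi2]; ring)
  have hexp : 0 ≤ 2 - del n := sub_nonneg.2 (del_le_two hn)
  exact (continuousOn_const.mul (Real.continuous_rpow_const hexp).continuousOn).add hh

/-! ### Positivity for large times -/

theorem phiFun_eq_rpow_neg_gam_mul (n : ℕ) (η μ h : ℝ → ℝ) (x : ℝ) {t : ℝ} (ht : 0 < t) :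
    phiFun n η μ h x t = t ^ (-gam n) * (η (|x| / t ^ alph n)
      + t ^ (-(eps n - gam n)) * mu3 n μ (|x| / √t)
      + t ^ (-(2 * gam n)) * phi2 n h (|x| / t ^ alph n)) := by
  have heps : t ^ (-eps n) = t ^ (-gam n) * t ^ (-(eps n - gam n)) := by
    rw [← Real.rpow_add ht]
    ring_nf
  have hgam : t ^ (-(3 * gam n)) = t ^ (-gam n) * t ^ (-(2 * gam n)) := by
    rw [← Real.rpow_add ht]
    ring_nf
  rw [phiFun, heps, hgam]
  ring

theorem eventually_forall_ubar_add_phiFun_pos {n : ℕ} (hn : 1 < n) {η μ h : ℝ → ℝ}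
    (hη : ContinuousOn η (Ici 0)) (hη_pos : ∀ z ∈ Ici (0 : ℝ), 0 < η z)
    (hμ : BddBelow (mu3 n μ '' Ici 0)) (hh : BddBelow (phi2 n h '' Ici 0)) :
    ∀ᶠ t in atTop, ∀ x, 0 < ubar x t + phiFun n η μ h x t := by
  obtain ⟨c, hc, hmain⟩ := exists_pos_forall_mul_le_mu1_add hη hη_pos
  obtain ⟨A, hA⟩ := hμ
  obtain ⟨B, hB⟩ := hh
  have hlim : Tendsto (fun t : ℝ => c + t ^ (-(eps n - gam n)) * A + t ^ (-(2 * gam n)) * B)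
      atTop (𝓝 (c + 0 * A + 0 * B)) :=
    (((tendsto_rpow_neg_atTop (sub_pos.2 (gam_lt_eps hn))).mul_const A).const_add c).add
      ((tendsto_rpow_neg_atTop (mul_pos two_pos (gam_pos n))).mul_const B)
  filter_upwards [hlim.eventually_const_lt (u := 0) (by simpa using hc), eventually_ge_atTop 1]
    with t hpos ht x
  have ht0 : 0 < t := by linarith
  have hr : 0 < t ^ (-gam n) := Real.rpow_pos_of_pos ht0 _
  have hr1 : t ^ (-gam n) ≤ 1 :=
    Real.rpow_le_one_of_one_le_of_nonpos ht (neg_nonpos.2 (gam_pos n).le)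
  have hz : 0 ≤ |x| / t ^ alph n := by positivity
  have hlead : c * t ^ (-gam n) ≤ ubar x t + t ^ (-gam n) * η (|x| / t ^ alph n) := by
    rw [ubar, div_sqrt_eq_div_rpow_alph_mul n _ ht0]
    exact hmain _ ⟨hr.le, hr1⟩ _ hz
  have hmu3 : A ≤ mu3 n μ (|x| / √t) :=
    hA (mem_image_of_mem _ (div_nonneg (abs_nonneg x) t.sqrt_nonneg))
  have hphi2 : B ≤ phi2 n h (|x| / t ^ alph n) := hB (mem_image_of_mem _ hz)
  calc 0 < t ^ (-gam n) * (c + t ^ (-(eps n - gam n)) * A + t ^ (-(2 * gam n)) * B) :=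
        mul_pos hr hpos
    _ ≤ t ^ (-gam n) * (c + t ^ (-(eps n - gam n)) * mu3 n μ (|x| / √t)
          + t ^ (-(2 * gam n)) * phi2 n h (|x| / t ^ alph n)) := by gcongr
    _ ≤ ubar x t + phiFun n η μ h x t := by
        rw [phiFun_eq_rpow_neg_gam_mul n η μ h x ht0]
        linarith

theorem Vhat_nonneg {n : ℕ} (hodd : Odd n) {η μ h : ℝ → ℝ} {x t : ℝ}
    (hpos : 0 ≤ ubar x t + phiFun n η μ h x t) : 0 ≤ Vhat n η μ h x t :=
  mul_nonneg (mul_nonneg (by positivity) ((hodd.tsub_odd odd_one).pow_nonneg _)) hpos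

theorem potential_nonneg_odd_general {n : ℕ} (hn : 5 ≤ n) (hodd : Odd n) {η μ h : ℝ → ℝ}
    (hη : ContinuousOn η (Ici 0)) (hη_pos : ∀ z ∈ Ici (0 : ℝ), 0 < η z)
    (hμ : IsDiffusiveSupersolution n μ) (hh : ContinuousOn h (Ici 0))
    (hh_bdd : IsBoundedUnder (· ≥ ·) atTop fun z => h z - lam0 n * z ^ (2 - del n)) :
    ∃ τ₀ : ℝ, 1 ≤ τ₀ ∧ ∀ t ≥ τ₀, ∀ x : ℝ, 0 ≤ Vhat n η μ h x t := by
  have hn4 : 4 ≤ n := by omega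
  obtain ⟨T, hT⟩ := eventually_atTop.1 <| eventually_forall_ubar_add_phiFun_pos (by omega)
    hη hη_pos (hμ.bddBelow_mu3 hn4) (bddBelow_phi2 hn4 hh hh_bdd)
  exact ⟨max 1 T, le_max_left 1 T, fun t ht x =>
    Vhat_nonneg hodd (hT t ((le_max_right 1 T).trans ht) x).le⟩

/-- For n odd, n ≥ 5, the potential V̂ is nonnegative for all large times. -/
theorem potential_nonneg_odd (n : ℕ) (hn : 5 ≤ n) (hodd : Odd n) (η μ h : ℝ → ℝ)
    (hη : IsReactiveProfile n η) (hμ : IsDiffusiveProfile n μ) (hh : IsCorrector n η h) :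
    ∃ τ₀ : ℝ, 1 ≤ τ₀ ∧ ∀ t ≥ τ₀, ∀ x : ℝ, 0 ≤ Vhat n η μ h x t := by
  exact potential_nonneg_odd_general hn hodd hη.1.continuousOn hη.2.1 hμ.isDiffusiveSupersolution
    hh.1.continuousOn hh.2.2.2.isBoundedUnder_ge
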